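/- The number of pairs (π, f) where π is a noncrossing set partition of [k] and f assigns to each block of π a 321-avoiding permutation (linear ordering avoiding pattern 321) of that block equals (1/(2k+1)) * C(3k, k). -/

import Mathlib

/-- A list avoids the pattern 321 if it has no decreasing subsequence of length 3. -/
def Avoids321 {α : Type*} [LinearOrder α] (l : List α) : Prop :=
  ¬ ∃ a b c : α, [a, b, c].Sublist l ∧ b < a ∧ c < b

/-!
Build the structures by inserting the elements of the ground set in increasing order. A new
maximum `a` can enter a 321-avoiding list exactly at the places after which the list increases, and
it creates no crossing exactly when no other block encloses the receiving one. So the legal places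
for `a` are the insertion sites of the outer blocks, where the empty list stands for a block that is
yet to be opened. After the insertion, the outer blocks to the right of the receiving one are
enclosed by it, and those to its left stay outer. Hence the children of a structure with `n` legal
places have `3, 4, …, n + 2` legal places, each value occurring once, and the structures on `k`
elements are the nodes at depth `k` of the generating tree with root `1` and rule
`n ↦ 3, 4, …, n + 2`. A node `n` of this tree has `C(3k - 1 + n, k) - 2 C(3k - 1 + n, k - 1)`
descendants at depth `k`.
-/

open Finset

section Descendants

/-- The number of nodes at depth `k` below a node labelled `n` in the generating tree with rule
`n ↦ 3, 4, …, n + 2`, where each label on the right belongs to exactly one child. -/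
def descendants : ℕ → ℕ → ℕ
  | 0, _ => 1
  | k + 1, n => ∑ t ∈ Icc 3 (n + 2), descendants k t

lemma descendants_succ_zero (k : ℕ) : descendants (k + 1) 0 = 0 := rfl

lemma descendants_succ_succ (k n : ℕ) :
    descendants (k + 1) (n + 1) = descendants (k + 1) n + descendants k (n + 3) :=
  sum_Icc_succ_top (by lia) _

lemma descendants_add_two_mul_choose (k n : ℕ) :
    descendants (k + 1) n + 2 * (3 * k + 2 + n).choose k = (3 * k + 2 + n).choose (k + 1) := by
  induction k generalizing n with
  | zero =>
    simp only [descendants, sum_const, Nat.card_Icc, smul_eq_mul, mul_one, Nat.choose_zero_right,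
      Nat.choose_one_right, zero_add, mul_zero]
    lia
  | succ k ihk =>
    induction n with
    | zero =>
      have hchoose := Nat.choose_succ_right_eq (3 * (k + 1) + 2) (k + 1)
      rw [show 3 * (k + 1) + 2 - (k + 1) = 2 * (k + 1 + 1) by lia] at hchoose
      rw [descendants_succ_zero, zero_add, add_zero]
      exact Nat.eq_of_mul_eq_mul_right (Nat.succ_pos (k + 1)) (by linarith)
    | succ n ihn =>
      have hprev := ihk (n + 3)
      rw [show 3 * k + 2 + (n + 3) = 3 * (k + 1) + 2 + n by ring] at hprev
      rw [descendants_succ_succ, ← add_assoc, Nat.choose_succ_succ',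
        Nat.choose_succ_succ' _ (k + 1)]
      linarith

lemma descendants_one (k : ℕ) : descendants k 1 = (3 * k).choose k / (2 * k + 1) := by
  cases k with
  | zero => rfl
  | succ k =>
    have hsum := descendants_add_two_mul_choose k 1
    have hchoose := Nat.choose_succ_right_eq (3 * k + 3) k
    rw [show 3 * k + 3 - k = 2 * k + 3 by lia] at hchoose
    refine (Nat.div_eq_of_eq_mul_right (by lia) ?_).symm
    rw [show 3 * (k + 1) = 3 * k + 3 by ring]
    linear_combination (2 * k + 3) * hsum.symm + 2 * hchoose.symm

end Descendants

section InsertIdx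

variable {α : Type*} {l : List α} {a : α} {i : ℕ}

lemma insertIdx_eq_take_append_cons_drop (hi : i ≤ l.length) (a : α) :
    l.insertIdx i a = l.take i ++ a :: l.drop i := by
  induction i generalizing l with
  | zero => simp
  | succ i ih => cases l <;> grind

lemma erase_insertIdx [DecidableEq α] (ha : a ∉ l) (hi : i ≤ l.length) :
    (l.insertIdx i a).erase a = l := by
  rw [insertIdx_eq_take_append_cons_drop hi,
    List.erase_append_right _ fun h => ha (List.mem_of_mem_take h), List.erase_cons_head,
    List.take_append_drop]

end InsertIdx

section InsertionSites

variable {α : Type*} [LinearOrder α] {l : List α} {a : α} {i : ℕ}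

lemma Avoids321.sublist {m : List α} (h : Avoids321 m) (hlm : l.Sublist m) : Avoids321 l :=
  fun ⟨x, y, z, hxyz, hlt⟩ => h ⟨x, y, z, hxyz.trans hlm, hlt⟩

lemma avoids321_append_cons_iff {p q : List α} (ha : ∀ x ∈ p ++ q, x < a) (hq : q.Nodup) :
    Avoids321 (p ++ a :: q) ↔ Avoids321 (p ++ q) ∧ q.Pairwise (· < ·) := by
  refine ⟨fun h => ⟨h.sublist ((List.sublist_cons_self a q).append_left p), ?_⟩, ?_⟩
  · rw [List.pairwise_iff_forall_sublist]
    intro y z hyz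
    have hne : y ≠ z := by simpa using hq.sublist hyz
    by_contra hlt
    exact h ⟨a, y, z, (hyz.cons_cons a).trans (List.sublist_append_right p _),
      ha y (List.mem_append_right p (hyz.subset (by simp))),
      lt_of_le_of_ne (not_lt.1 hlt) hne.symm⟩
  · rintro ⟨hpq, hinc⟩ ⟨x, y, z, hxyz, hyx, hzy⟩
    have hapq : a ∉ p ++ q := fun h => lt_irrefl a (ha a h)
    obtain rfl | hxa : x = a ∨ x < a := by
      have : x ∈ p ++ a :: q := hxyz.subset (by simp)
      grind
    · obtain ⟨u, v, huv, hu, hv⟩ := List.sublist_append_iff.1 hxyz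
      obtain rfl : u = [] := by
        rw [List.eq_nil_iff_forall_not_mem]
        cases u <;> grind
      rw [List.nil_append] at huv
      rw [← huv, List.cons_sublist_cons] at hv
      exact hzy.asymm (List.pairwise_iff_forall_sublist.1 hinc hv)
    · refine hpq ⟨x, y, z, ?_, hyx, hzy⟩
      have herase := hxyz.erase a
      rwa [List.erase_of_not_mem (by grind), List.erase_append_right _ (by grind),
        List.erase_cons_head] at herase

/-- The positions at which a new maximum can be inserted into a 321-avoiding list without creating
the pattern 321; position `i` is in front of the entry with index `i`. -/
def insertionSites (l : List α) : Finset ℕ :=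
  {i ∈ range (l.length + 1) | (l.drop i).Pairwise (· < ·)}

lemma mem_insertionSites :
    i ∈ insertionSites l ↔ i ≤ l.length ∧ (l.drop i).Pairwise (· < ·) := by
  simp [insertionSites]

lemma insertionSites_nil : insertionSites ([] : List α) = {0} := rfl

lemma Icc_subset_insertionSites (hi : i ∈ insertionSites l) :
    Icc i l.length ⊆ insertionSites l := by
  intro j hj
  rw [mem_Icc] at hj
  exact mem_insertionSites.2
    ⟨hj.2, (mem_insertionSites.1 hi).2.sublist (List.drop_sublist_drop_left l hj.1)⟩

lemma insertionSites_append_singleton (ha : ∀ x ∈ l, x < a) :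
    insertionSites (l ++ [a]) = insert (l.length + 1) (insertionSites l) := by
  ext j
  rcases Nat.lt_or_ge l.length j with hj | hj
  · have : (l ++ [a]).drop (l.length + 1) = [] := by simp
    grind [mem_insertionSites]
  · have : ∀ x ∈ l.drop j, x < a := fun x hx => ha x (List.mem_of_mem_drop hx)
    grind [mem_insertionSites]

lemma insertionSites_insertIdx_of_lt (ha : ∀ x ∈ l, x < a) (hi : i ∈ insertionSites l)
    (hil : i < l.length) : insertionSites (l.insertIdx i a) = Icc (i + 1) (l.length + 1) := by
  obtain ⟨-, hinc⟩ := mem_insertionSites.1 hi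
  have hdrop : (l.insertIdx i a).drop i = a :: l.drop i := by
    simp [insertIdx_eq_take_append_cons_drop hil.le, hil.le]
  have hdrop_succ : (l.insertIdx i a).drop (i + 1) = l.drop i := by
    rw [← List.drop_drop, hdrop, List.drop_one, List.tail_cons]
  ext j
  rw [mem_insertionSites, mem_Icc, List.length_insertIdx_of_le_length hil.le, and_comm]
  refine and_congr_left fun _ => ⟨fun hj => ?_, fun hij => ?_⟩
  · by_contra! hji
    have hcons : (a :: l.drop i).Pairwise (· < ·) :=
      hj.sublist (hdrop ▸ List.drop_sublist_drop_left _ (Nat.le_of_lt_succ hji))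
    have hmem : l[i] ∈ l.drop i := List.drop_eq_getElem_cons hil ▸ List.mem_cons_self
    exact (ha _ (List.getElem_mem hil)).asymm (List.rel_of_pairwise_cons hcons hmem)
  · exact hinc.sublist (hdrop_succ ▸ List.drop_sublist_drop_left _ hij)

lemma card_insertionSites_append_singleton (ha : ∀ x ∈ l, x < a) :
    #(insertionSites (l ++ [a])) = #(insertionSites l) + 1 := by
  rw [insertionSites_append_singleton ha, card_insert_of_notMem]
  simp [mem_insertionSites]

lemma card_insertionSites_insertIdx_of_lt (ha : ∀ x ∈ l, x < a) (hi : i ∈ insertionSites l)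
    (hil : i < l.length) : #(insertionSites (l.insertIdx i a)) = l.length + 1 - i := by
  rw [insertionSites_insertIdx_of_lt ha hi hil, Nat.card_Icc]
  lia

lemma card_insertionSites_insertIdx_mem_Icc (ha : ∀ x ∈ l, x < a) (hi : i ∈ insertionSites l) :
    #(insertionSites (l.insertIdx i a)) ∈ Icc 2 (#(insertionSites l) + 1) := by
  have hle := card_le_card (Icc_subset_insertionSites hi)
  rw [Nat.card_Icc] at hle
  rw [mem_Icc]
  obtain rfl | hil := (mem_insertionSites.1 hi).1.eq_or_lt
  · rw [List.insertIdx_length_self, card_insertionSites_append_singleton ha]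
    lia
  · rw [card_insertionSites_insertIdx_of_lt ha hi hil]
    lia

lemma injOn_card_insertionSites_insertIdx (ha : ∀ x ∈ l, x < a) :
    Set.InjOn (fun i => #(insertionSites (l.insertIdx i a))) (insertionSites l) := by
  intro i hi j hj hij
  have hlast : #(insertionSites (l.insertIdx l.length a)) = #(insertionSites l) + 1 := by
    rw [List.insertIdx_length_self, card_insertionSites_append_singleton ha]
  have hcard : ∀ k ∈ insertionSites l, k < l.length →
      #(insertionSites (l.insertIdx k a)) = l.length + 1 - k ∧
        l.length + 1 - k ≤ #(insertionSites l) := fun k hk hkl =>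
    ⟨card_insertionSites_insertIdx_of_lt ha hk hkl,
      Nat.card_Icc k l.length ▸ card_le_card (Icc_subset_insertionSites hk)⟩
  dsimp only at hij
  obtain rfl | hil := (mem_insertionSites.1 hi).1.eq_or_lt <;>
    obtain rfl | hjl := (mem_insertionSites.1 hj).1.eq_or_lt
  · rfl
  · have := hcard j hj hjl
    lia
  · have := hcard i hi hil
    lia
  · have := hcard i hi hil
    have := hcard j hj hjl
    lia

end InsertionSites

section Crossings

variable {α : Type*} [Preorder α] {l l' m m' : List α} {a : α}

/-- The crossing relation between blocks of a set partition. It is not symmetric: the smallest of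
the four interleaved entries is taken from `l`. -/
def Crosses (l m : List α) : Prop :=
  ∃ a b c d, a < b ∧ b < c ∧ c < d ∧ a ∈ l ∧ c ∈ l ∧ b ∈ m ∧ d ∈ m

/-- Some entry of `m` lies between two entries of `l`. For distinct blocks of a noncrossing
partition this says that `m` is nested in `l`. -/
def Encloses (l m : List α) : Prop :=
  ∃ a b c, a < b ∧ b < c ∧ a ∈ l ∧ c ∈ l ∧ b ∈ m

lemma not_crosses_nil_left : ¬ Crosses [] m := by
  simp [Crosses]

lemma not_crosses_nil_right : ¬ Crosses l [] := by
  simp [Crosses]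

lemma Crosses.mono (hl : l ⊆ l') (hm : m ⊆ m') : Crosses l m → Crosses l' m' :=
  fun ⟨x, y, z, w, hxy, hyz, hzw, hx, hz, hy, hw⟩ =>
    ⟨x, y, z, w, hxy, hyz, hzw, hl hx, hl hz, hm hy, hm hw⟩

lemma Crosses.of_cons_left (ha : ∀ x ∈ m, x < a) : Crosses (a :: l) m → Crosses l m := by
  rintro ⟨x, y, z, w, hxy, hyz, hzw, hx, hz, hy, hw⟩
  have hza := hzw.trans (ha w hw)
  exact ⟨x, y, z, w, hxy, hyz, hzw, List.mem_of_ne_of_mem (hxy.trans (hyz.trans hza)).ne hx,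
    List.mem_of_ne_of_mem hza.ne hz, hy, hw⟩

lemma crosses_cons_right_iff (ha : ∀ x ∈ l, x < a) : Crosses l (a :: m) ↔ Encloses l m := by
  constructor
  · rintro ⟨x, y, z, -, hxy, hyz, -, hx, hz, hy, -⟩
    exact ⟨x, y, z, hxy, hyz, hx, hz, List.mem_of_ne_of_mem (hyz.trans (ha z hz)).ne hy⟩
  · rintro ⟨x, y, z, hxy, hyz, hx, hz, hy⟩
    exact ⟨x, y, z, a, hxy, hyz, ha z hz, hx, hz, List.mem_cons_of_mem a hy, List.mem_cons_self⟩

lemma Encloses.mono (hl : l ⊆ l') (hm : m ⊆ m') : Encloses l m → Encloses l' m' :=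
  fun ⟨x, y, z, hxy, hyz, hx, hz, hy⟩ => ⟨x, y, z, hxy, hyz, hl hx, hl hz, hm hy⟩

lemma not_encloses_nil_left : ¬ Encloses [] m := by
  simp [Encloses]

lemma not_encloses_nil_right : ¬ Encloses l [] := by
  simp [Encloses]

lemma Encloses.of_cons_right (ha : ∀ x ∈ l, x < a) : Encloses l (a :: m) → Encloses l m :=
  fun ⟨x, y, z, hxy, hyz, hx, hz, hy⟩ =>
    ⟨x, y, z, hxy, hyz, hx, hz, List.mem_of_ne_of_mem (hyz.trans (ha z hz)).ne hy⟩

lemma encloses_cons_left_iff (ha : ∀ y ∈ m, y < a) :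
    Encloses (a :: l) m ↔ ∃ x ∈ l, ∃ y ∈ m, x < y := by
  constructor
  · rintro ⟨x, y, -, hxy, -, hx, -, hy⟩
    exact ⟨x, List.mem_of_ne_of_mem (hxy.trans (ha y hy)).ne hx, y, hy, hxy⟩
  · rintro ⟨x, hx, y, hy, hxy⟩
    exact ⟨x, y, a, hxy, ha y hy, List.mem_cons_of_mem a hx, List.mem_cons_self, hy⟩

end Crossings

section Structures

variable {α : Type*} [LinearOrder α] {l m : List α} {a : α} {s : Finset α}
  {S : Finset (List α)} {p : Σ _ : List α, ℕ}

/-- `S` consists of 321-avoiding orderings of the blocks of a noncrossing partition of `s`, one for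
each block, together with the empty list, which stands for a block that is yet to be opened. -/
structure IsNoncrossing321 (s : Finset α) (S : Finset (List α)) : Prop where
  nil_mem : [] ∈ S
  nodup : ∀ l ∈ S, l.Nodup
  avoids321 : ∀ l ∈ S, Avoids321 l
  mem_iff : ∀ x, x ∈ s ↔ ∃ l ∈ S, x ∈ l
  eq_of_mem : ∀ l ∈ S, ∀ m ∈ S, ∀ x ∈ l, x ∈ m → l = m
  eq_of_crosses : ∀ l ∈ S, ∀ m ∈ S, Crosses l m → l = m

open scoped Classical in
/-- The blocks that no other block encloses; the empty list is one of them. -/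
noncomputable def outerBlocks (S : Finset (List α)) : Finset (List α) :=
  {l ∈ S | ∀ m ∈ S, Encloses m l → m = l}

/-- The places where a new maximum can be inserted without creating a crossing or the pattern 321,
each encoded as an outer block together with a position in it. -/
noncomputable def activeSites (S : Finset (List α)) : Finset (Σ _ : List α, ℕ) :=
  (outerBlocks S).sigma insertionSites

/-- Inserts the entry `a` at the place `p`. The empty list is put back, since it is used up when `p`
opens a new block. -/
def insertEntry (a : α) (S : Finset (List α)) (p : Σ _ : List α, ℕ) : Finset (List α) :=
  insert [] (insert (p.1.insertIdx p.2 a) (S.erase p.1))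

/-- Removes the entry `a`; a block consisting of `a` alone merges into the empty list. -/
def removeEntry (a : α) (S : Finset (List α)) : Finset (List α) :=
  S.image (·.erase a)

lemma mem_outerBlocks :
    l ∈ outerBlocks S ↔ l ∈ S ∧ ∀ m ∈ S, Encloses m l → m = l := by
  simp [outerBlocks]

lemma mem_activeSites :
    p ∈ activeSites S ↔ p.1 ∈ outerBlocks S ∧ p.2 ∈ insertionSites p.1 :=
  mem_sigma

lemma mem_insertEntry :
    l ∈ insertEntry a S p ↔ l = [] ∨ l = p.1.insertIdx p.2 a ∨ l ≠ p.1 ∧ l ∈ S := by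
  simp [insertEntry]

lemma mem_removeEntry :
    l ∈ removeEntry a S ↔ ∃ m ∈ S, m.erase a = l :=
  mem_image

lemma nil_mem_outerBlocks (hS : [] ∈ S) : [] ∈ outerBlocks S :=
  mem_outerBlocks.2 ⟨hS, fun _ _ h => (not_encloses_nil_right h).elim⟩

namespace IsNoncrossing321

lemma lt_of_mem (hS : IsNoncrossing321 s S) (ha : ∀ x ∈ s, x < a) (hl : l ∈ S) :
    ∀ x ∈ l, x < a :=
  fun x hx => ha x ((hS.mem_iff x).2 ⟨l, hl, hx⟩)

lemma notMem (hS : IsNoncrossing321 s S) (ha : a ∉ s) (hl : l ∈ S) : a ∉ l :=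
  fun h => ha ((hS.mem_iff a).2 ⟨l, hl, h⟩)

lemma eq_of_minimum_eq (hS : IsNoncrossing321 s S) (hl : l ∈ S) (hm : m ∈ S)
    (hlm : l.minimum = m.minimum) : l = m := by
  rcases eq_or_ne l [] with rfl | hne
  · exact (List.minimum_eq_top.1 hlm.symm).symm
  · obtain ⟨x, hx⟩ := WithTop.ne_top_iff_exists.1 (mt List.minimum_eq_top.1 hne)
    exact hS.eq_of_mem l hl m hm x (List.minimum_eq_coe_iff.1 hx.symm).1
      (List.minimum_eq_coe_iff.1 (hlm ▸ hx.symm)).1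

end IsNoncrossing321

lemma isNoncrossing321_removeEntry (hS : IsNoncrossing321 s S) (a : α) :
    IsNoncrossing321 (s.erase a) (removeEntry a S) where
  nil_mem := mem_removeEntry.2 ⟨[], hS.nil_mem, rfl⟩
  nodup := by
    intro l hl
    obtain ⟨m, hm, rfl⟩ := mem_removeEntry.1 hl
    exact (hS.nodup m hm).erase a
  avoids321 := by
    intro l hl
    obtain ⟨m, hm, rfl⟩ := mem_removeEntry.1 hl
    exact (hS.avoids321 m hm).sublist List.erase_sublist
  mem_iff x := by
    rw [mem_erase, hS.mem_iff]
    simp only [removeEntry, exists_mem_image]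
    constructor
    · rintro ⟨hxa, m, hm, hx⟩
      exact ⟨m, hm, (List.mem_erase_of_ne hxa).2 hx⟩
    · rintro ⟨m, hm, hx⟩
      rw [(hS.nodup m hm).mem_erase_iff] at hx
      exact ⟨hx.1, m, hm, hx.2⟩
  eq_of_mem := by
    simp only [removeEntry, forall_mem_image]
    intro l hl m hm x hxl hxm
    rw [hS.eq_of_mem l hl m hm x (List.erase_subset hxl) (List.erase_subset hxm)]
  eq_of_crosses := by
    simp only [removeEntry, forall_mem_image]
    intro l hl m hm h
    rw [hS.eq_of_crosses l hl m hm (h.mono List.erase_subset List.erase_subset)]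

lemma eq_of_crosses_of_mem_insertEntry (hS : IsNoncrossing321 s S) (ha : ∀ x ∈ s, x < a)
    (hp : p.1 ∈ outerBlocks S) (hl : l ∈ insertEntry a S p) (hm : m ∈ insertEntry a S p)
    (h : Crosses l m) : l = m := by
  obtain ⟨hpS, hout⟩ := mem_outerBlocks.1 hp
  have hsub : p.1.insertIdx p.2 a ⊆ a :: p.1 := List.insertIdx_subset_cons p.2 a p.1
  obtain rfl | rfl | ⟨hlp, hl⟩ := mem_insertEntry.1 hl
  · exact (not_crosses_nil_left h).elim
  · obtain rfl | rfl | ⟨hmp, hm⟩ := mem_insertEntry.1 hm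
    · exact (not_crosses_nil_right h).elim
    · rfl
    · have hcross : Crosses p.1 m :=
        (h.mono hsub (List.Subset.refl m)).of_cons_left (hS.lt_of_mem ha hm)
      exact (hmp (hS.eq_of_crosses p.1 hpS m hm hcross).symm).elim
  · obtain rfl | rfl | ⟨-, hm⟩ := mem_insertEntry.1 hm
    · exact (not_crosses_nil_right h).elim
    · have hencloses : Encloses l p.1 :=
        (crosses_cons_right_iff (hS.lt_of_mem ha hl)).1 (h.mono (List.Subset.refl l) hsub)
      exact (hlp (hout l hl hencloses)).elim
    · exact hS.eq_of_crosses l hl m hm h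

lemma isNoncrossing321_insertEntry (hS : IsNoncrossing321 s S) (ha : ∀ x ∈ s, x < a)
    (hp : p ∈ activeSites S) : IsNoncrossing321 (insert a s) (insertEntry a S p) := by
  obtain ⟨l, i⟩ := p
  obtain ⟨hlout, hi⟩ := mem_activeSites.1 hp
  have hl : l ∈ S := (mem_outerBlocks.1 hlout).1
  obtain ⟨hil, hinc⟩ := mem_insertionSites.1 hi
  have hmem : ∀ x, x ∈ l.insertIdx i a ↔ x = a ∨ x ∈ l := fun x => List.mem_insertIdx hil
  have hnot : ∀ m ∈ S, a ∉ m := fun m hm => hS.notMem (fun h => (ha a h).false) hm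
  refine ⟨mem_insertEntry.2 (Or.inl rfl), fun m hm => ?_, fun m hm => ?_, fun x => ?_,
    fun m hm m' hm' x hx hx' => ?_,
    fun m hm m' hm' => eq_of_crosses_of_mem_insertEntry hS ha hlout hm hm'⟩
  · obtain rfl | rfl | ⟨-, hm⟩ := mem_insertEntry.1 hm
    · exact List.nodup_nil
    · rw [(List.perm_insertIdx a l hil).nodup_iff, List.nodup_cons]
      exact ⟨hnot l hl, hS.nodup l hl⟩
    · exact hS.nodup m hm
  · obtain rfl | rfl | ⟨-, hm⟩ := mem_insertEntry.1 hm
    · exact hS.avoids321 [] hS.nil_mem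
    · rw [insertIdx_eq_take_append_cons_drop hil, avoids321_append_cons_iff]
      · exact ⟨(l.take_append_drop i).symm ▸ hS.avoids321 l hl, hinc⟩
      · exact (l.take_append_drop i).symm ▸ hS.lt_of_mem ha hl
      · exact (hS.nodup l hl).sublist (List.drop_sublist i l)
    · exact hS.avoids321 m hm
  · have := hS.mem_iff
    grind [mem_insertEntry]
  · have := hS.eq_of_mem
    grind [mem_insertEntry]

lemma removeEntry_insertEntry (hS : IsNoncrossing321 s S) (ha : a ∉ s) (hp : p ∈ activeSites S) :
    removeEntry a (insertEntry a S p) = S := by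
  obtain ⟨l, i⟩ := p
  obtain ⟨hlS, hi⟩ := mem_activeSites.1 hp
  have hl := (mem_outerBlocks.1 hlS).1
  have hid : Set.EqOn (fun m : List α => m.erase a) id (S.erase l) := fun m hm =>
    List.erase_of_not_mem (hS.notMem ha (mem_of_mem_erase hm))
  rw [insertEntry, removeEntry, image_insert, image_insert, image_congr hid, image_id,
    erase_insertIdx (hS.notMem ha hl) (mem_insertionSites.1 hi).1, insert_erase hl,
    List.erase_nil, insert_eq_of_mem hS.nil_mem]

lemma removeEntry_eq_insert_erase (hS : IsNoncrossing321 s S) (hl : l ∈ S) (ha : a ∈ l) :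
    removeEntry a S = insert (l.erase a) (S.erase l) := by
  have hid : Set.EqOn (fun m : List α => m.erase a) id (S.erase l) := fun m hm =>
    List.erase_of_not_mem fun h =>
      ne_of_mem_erase hm (hS.eq_of_mem m (mem_of_mem_erase hm) l hl a h ha)
  nth_rw 1 [removeEntry, ← insert_erase hl]
  rw [image_insert, image_congr hid, image_id]

lemma erase_mem_outerBlocks_removeEntry (hS : IsNoncrossing321 s S)
    (hlt : ∀ m ∈ removeEntry a S, ∀ x ∈ m, x < a) (hl : l ∈ S) (ha : a ∈ l) :
    l.erase a ∈ outerBlocks (removeEntry a S) := by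
  refine mem_outerBlocks.2 ⟨mem_removeEntry.2 ⟨l, hl, rfl⟩, fun m hm hml => ?_⟩
  obtain ⟨m', hm', rfl⟩ := mem_removeEntry.1 hm
  have hcross : Crosses m' l :=
    ((crosses_cons_right_iff (hlt _ hm)).2 hml).mono List.erase_subset
      (List.perm_cons_erase ha).symm.subset
  rw [hS.eq_of_crosses m' hm' l hl hcross]

lemma exists_insertEntry_removeEntry (hS : IsNoncrossing321 s S) (ha : a ∈ s)
    (hmax : ∀ x ∈ s.erase a, x < a) :
    ∃ p ∈ activeSites (removeEntry a S), insertEntry a (removeEntry a S) p = S := by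
  have hlt := fun m => (isNoncrossing321_removeEntry hS a).lt_of_mem (l := m) hmax
  obtain ⟨c, hc, hac⟩ := (hS.mem_iff a).1 ha
  have houter := erase_mem_outerBlocks_removeEntry hS hlt hc hac
  have hremove := removeEntry_eq_insert_erase hS hc hac
  obtain ⟨u, v, rfl⟩ := List.append_of_mem hac
  obtain ⟨hauv, huv⟩ := List.nodup_cons.1 (List.nodup_middle.1 (hS.nodup _ hc))
  have hins : (u ++ v).insertIdx u.length a = u ++ a :: v := by
    simp [insertIdx_eq_take_append_cons_drop]
  have herase : (u ++ a :: v).erase a = u ++ v := by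
    rw [← hins, erase_insertIdx hauv (by simp)]
  rw [herase] at houter hremove
  refine ⟨⟨u ++ v, u.length⟩, mem_activeSites.2 ⟨houter, ?_⟩, ?_⟩
  · have hlt_uv := hlt _ (mem_outerBlocks.1 houter).1
    rw [mem_insertionSites, List.drop_left]
    exact ⟨by simp, ((avoids321_append_cons_iff hlt_uv huv.of_append_right).1
      (hS.avoids321 _ hc)).2⟩
  · have huv_nil : u ++ v ∈ S → u ++ v = [] := fun h =>
      List.eq_nil_iff_forall_not_mem.2 fun x hx => hauv <|
        hS.eq_of_mem _ h _ hc x hx (List.perm_middle.symm.subset (List.mem_cons_of_mem a hx)) ▸ hac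
    have hnil := hS.nil_mem
    ext m
    rw [mem_insertEntry, hins, hremove]
    grind

lemma lt_of_minimum_lt_minimum (hm : ¬ Encloses m l) (hml : m.minimum < l.minimum)
    {x y : α} (hx : x ∈ m) (hy : y ∈ l) (hne : x ≠ y) : x < y := by
  obtain ⟨z, hz⟩ := WithTop.ne_top_iff_exists.1 hml.ne_top
  rw [← hz] at hml
  have hzy : z < y := WithTop.coe_lt_coe.1 (hml.trans_le (List.minimum_le_of_mem' hy))
  exact hne.lt_or_gt.resolve_right fun hyx =>
    hm ⟨z, y, x, hzy, hyx, (List.minimum_eq_coe_iff.1 hz.symm).1, hx, hy⟩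

lemma minimum_lt_minimum (hm : m ≠ []) (hlt : ∀ x ∈ m, ∀ y ∈ l, x < y) :
    m.minimum < l.minimum := by
  obtain ⟨x, hx⟩ := WithTop.ne_top_iff_exists.1 (mt List.minimum_eq_top.1 hm)
  rcases eq_or_ne l [] with rfl | hl
  · exact hx ▸ WithTop.coe_lt_top x
  · obtain ⟨y, hy⟩ := WithTop.ne_top_iff_exists.1 (mt List.minimum_eq_top.1 hl)
    rw [← hx, ← hy, WithTop.coe_lt_coe]
    exact hlt x (List.minimum_eq_coe_iff.1 hx.symm).1 y (List.minimum_eq_coe_iff.1 hy.symm).1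

lemma insertIdx_mem_outerBlocks_insertEntry (hS : IsNoncrossing321 s S) (ha : ∀ x ∈ s, x < a)
    (hp : p ∈ activeSites S) :
    p.1.insertIdx p.2 a ∈ outerBlocks (insertEntry a S p) := by
  refine mem_outerBlocks.2 ⟨mem_insertEntry.2 (Or.inr (Or.inl rfl)), fun m hm h => ?_⟩
  obtain rfl | rfl | ⟨hne, hm⟩ := mem_insertEntry.1 hm
  · exact (not_encloses_nil_left h).elim
  · rfl
  · have hout := (mem_outerBlocks.1 (mem_activeSites.1 hp).1).2
    exact (hne (hout m hm <| Encloses.of_cons_right (hS.lt_of_mem ha hm) <|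
      h.mono (List.Subset.refl m) (List.insertIdx_subset_cons p.2 a p.1))).elim

lemma mem_outerBlocks_insertEntry (hS : IsNoncrossing321 s S) (ha : ∀ x ∈ s, x < a)
    (hp : p ∈ activeSites S) (hm : m ∈ S) (hnil : m ≠ []) (hmp : m ≠ p.1) :
    m ∈ outerBlocks (insertEntry a S p) ↔ m ∈ outerBlocks S ∧ m.minimum < p.1.minimum := by
  obtain ⟨l, i⟩ := p
  obtain ⟨hl, hlout⟩ := mem_outerBlocks.1 (mem_activeSites.1 hp).1
  have hil : i ≤ l.length := (mem_insertionSites.1 (mem_activeSites.1 hp).2).1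
  have hsub : l.insertIdx i a ⊆ a :: l := List.insertIdx_subset_cons i a l
  have hsup : a :: l ⊆ l.insertIdx i a := (List.perm_insertIdx a l hil).symm.subset
  have hlt := hS.lt_of_mem ha hm
  have hne : ∀ x ∈ m, ∀ y ∈ l, x ≠ y := fun x hx y hy hxy =>
    hmp (hS.eq_of_mem m hm l hl x hx (hxy ▸ hy))
  constructor
  · intro h
    obtain ⟨-, hmout⟩ := mem_outerBlocks.1 h
    have hnot : ¬ Encloses (l.insertIdx i a) m := fun h =>
      (hlt a (hmout _ (mem_insertEntry.2 (Or.inr (Or.inl rfl))) h ▸ hsup List.mem_cons_self)).false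
    refine ⟨mem_outerBlocks.2 ⟨hm, fun m' hm' henc => ?_⟩, minimum_lt_minimum hnil ?_⟩
    · have hm'l : m' ≠ l := by
        rintro rfl
        exact hnot (henc.mono (List.subset_insertIdx m' i a) (List.Subset.refl m))
      exact hmout m' (mem_insertEntry.2 (Or.inr (Or.inr ⟨hm'l, hm'⟩))) henc
    · refine fun x hx y hy => (hne x hx y hy).lt_or_gt.resolve_right fun hyx => hnot ?_
      exact ((encloses_cons_left_iff hlt).2 ⟨y, hy, x, hx, hyx⟩).mono hsup (List.Subset.refl m)
  · rintro ⟨hmout, hml⟩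
    refine mem_outerBlocks.2 ⟨mem_insertEntry.2 (Or.inr (Or.inr ⟨hmp, hm⟩)), fun m' hm' h => ?_⟩
    obtain rfl | rfl | ⟨-, hm'⟩ := mem_insertEntry.1 hm'
    · exact (not_encloses_nil_left h).elim
    · obtain ⟨y, hy, x, hx, hyx⟩ :=
        (encloses_cons_left_iff hlt).1 (h.mono hsub (List.Subset.refl m))
      have hxy := lt_of_minimum_lt_minimum (fun h => hmp (hlout m hm h)) hml hx hy (hne x hx y hy)
      exact (hxy.asymm hyx).elim
    · exact (mem_outerBlocks.1 hmout).2 m' hm' h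

lemma outerBlocks_insertEntry (hS : IsNoncrossing321 s S) (ha : ∀ x ∈ s, x < a)
    (hp : p ∈ activeSites S) :
    outerBlocks (insertEntry a S p) = insert [] (insert (p.1.insertIdx p.2 a)
      {m ∈ outerBlocks S | m.minimum < p.1.minimum}) := by
  ext m
  rw [mem_insert, mem_insert, mem_filter]
  rcases eq_or_ne m [] with rfl | hnil
  · exact iff_of_true (nil_mem_outerBlocks (mem_insertEntry.2 (Or.inl rfl))) (Or.inl rfl)
  rcases eq_or_ne m (p.1.insertIdx p.2 a) with rfl | hins
  · exact iff_of_true (insertIdx_mem_outerBlocks_insertEntry hS ha hp) (Or.inr (Or.inl rfl))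
  simp only [hnil, hins, false_or]
  by_cases hm : m ∈ S ∧ m ≠ p.1
  · exact mem_outerBlocks_insertEntry hS ha hp hm.1 hnil hm.2
  · refine iff_of_false (fun h => hm ?_) fun h => hm ?_
    · have := (mem_insertEntry.1 (mem_outerBlocks.1 h).1)
      tauto
    · exact ⟨(mem_outerBlocks.1 h.1).1, fun h' => (h' ▸ h.2).false⟩

lemma card_activeSites_insertEntry (hS : IsNoncrossing321 s S) (ha : ∀ x ∈ s, x < a)
    (hp : p ∈ activeSites S) :
    #(activeSites (insertEntry a S p)) = 1 + (#(insertionSites (p.1.insertIdx p.2 a)) +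
      ∑ m ∈ outerBlocks S with m.minimum < p.1.minimum, #(insertionSites m)) := by
  have hmem : a ∈ p.1.insertIdx p.2 a :=
    (List.mem_insertIdx (mem_insertionSites.1 (mem_activeSites.1 hp).2).1).2 (Or.inl rfl)
  have hins : p.1.insertIdx p.2 a ∉ ({m ∈ outerBlocks S | m.minimum < p.1.minimum} : Finset _) :=
    fun h => (hS.lt_of_mem ha (mem_outerBlocks.1 (mem_filter.1 h).1).1 a hmem).false
  have hnil : [] ∉ insert (p.1.insertIdx p.2 a)
      ({m ∈ outerBlocks S | m.minimum < p.1.minimum} : Finset _) := by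
    rw [mem_insert, mem_filter]
    rintro (h | ⟨-, h⟩)
    · simp [← h] at hmem
    · exact not_top_lt h
  rw [activeSites, card_sigma, outerBlocks_insertEntry hS ha hp, sum_insert hnil, sum_insert hins,
    insertionSites_nil, card_singleton]

lemma sum_outerBlocks_add_card_le (hl : l ∈ outerBlocks S) (hlm : l.minimum < m.minimum) :
    ∑ l' ∈ outerBlocks S with l'.minimum < l.minimum, #(insertionSites l') + #(insertionSites l) ≤
      ∑ l' ∈ outerBlocks S with l'.minimum < m.minimum, #(insertionSites l') := by
  rw [add_comm, ← sum_insert (f := fun l' => #(insertionSites l')) (s := filter _ _) (by simp)]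
  refine sum_le_sum_of_subset (insert_subset (by simp [hl, hlm]) ?_)
  exact monotone_filter_right _ fun _ _ h => h.trans hlm

lemma card_activeSites_insertEntry_mem_Icc (hS : IsNoncrossing321 s S) (ha : ∀ x ∈ s, x < a)
    (hp : p ∈ activeSites S) :
    #(activeSites (insertEntry a S p)) ∈ Icc 3 (#(activeSites S) + 2) := by
  obtain ⟨hl, hi⟩ := mem_activeSites.1 hp
  have hIcc := mem_Icc.1 <| card_insertionSites_insertIdx_mem_Icc
    (hS.lt_of_mem ha (mem_outerBlocks.1 hl).1) hi
  have hle : ∑ m ∈ outerBlocks S with m.minimum < p.1.minimum, #(insertionSites m) +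
      #(insertionSites p.1) ≤ #(activeSites S) := by
    rw [activeSites, card_sigma, add_comm,
      ← sum_insert (f := fun m => #(insertionSites m)) (s := filter _ _) (by simp)]
    exact sum_le_sum_of_subset (insert_subset hl (filter_subset _ _))
  rw [card_activeSites_insertEntry hS ha hp, mem_Icc]
  lia

lemma injOn_card_activeSites_insertEntry (hS : IsNoncrossing321 s S) (ha : ∀ x ∈ s, x < a) :
    Set.InjOn (fun p => #(activeSites (insertEntry a S p))) (activeSites S) := by
  have hlt : ∀ p ∈ activeSites S, ∀ q ∈ activeSites S, p.1.minimum < q.1.minimum →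
      #(activeSites (insertEntry a S p)) < #(activeSites (insertEntry a S q)) := by
    intro p hp q hq hpq
    have hIcc : ∀ r ∈ activeSites S, 2 ≤ #(insertionSites (r.1.insertIdx r.2 a)) ∧
        #(insertionSites (r.1.insertIdx r.2 a)) ≤ #(insertionSites r.1) + 1 := fun r hr =>
      mem_Icc.1 <| card_insertionSites_insertIdx_mem_Icc
        (hS.lt_of_mem ha (mem_outerBlocks.1 (mem_activeSites.1 hr).1).1) (mem_activeSites.1 hr).2
    have hle := sum_outerBlocks_add_card_le (mem_activeSites.1 hp).1 hpq
    have := hIcc p hp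
    have := hIcc q hq
    rw [card_activeSites_insertEntry hS ha hp, card_activeSites_insertEntry hS ha hq]
    lia
  rintro ⟨l, i⟩ hp ⟨m, j⟩ hq hpq
  have hl := (mem_outerBlocks.1 (mem_activeSites.1 hp).1).1
  have hm := (mem_outerBlocks.1 (mem_activeSites.1 hq).1).1
  obtain rfl : l = m := hS.eq_of_minimum_eq hl hm <| le_antisymm
    (not_lt.1 fun h => (hlt _ hq _ hp h).ne' hpq) (not_lt.1 fun h => (hlt _ hp _ hq h).ne hpq)
  have hij : #(insertionSites (l.insertIdx i a)) = #(insertionSites (l.insertIdx j a)) := by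
    simpa [card_activeSites_insertEntry hS ha hp, card_activeSites_insertEntry hS ha hq] using hpq
  obtain rfl : i = j := injOn_card_insertionSites_insertIdx (hS.lt_of_mem ha hl)
    (mem_activeSites.1 hp).2 (mem_activeSites.1 hq).2 hij
  rfl

lemma image_card_activeSites_insertEntry (hS : IsNoncrossing321 s S) (ha : ∀ x ∈ s, x < a) :
    (activeSites S).image (fun p => #(activeSites (insertEntry a S p))) =
      Icc 3 (#(activeSites S) + 2) := by
  refine eq_of_subset_of_card_le
    (image_subset_iff.2 fun p hp => card_activeSites_insertEntry_mem_Icc hS ha hp) ?_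
  rw [card_image_of_injOn (injOn_card_activeSites_insertEntry hS ha), Nat.card_Icc]
  lia

open scoped Classical in
/-- The set of all structures on `s`, cut out of the sets of orderings of subsets of `s`. -/
noncomputable def families (s : Finset α) : Finset (Finset (List α)) :=
  {S ∈ (s.powerset.biUnion fun t => t.val.lists.toFinset).powerset | IsNoncrossing321 s S}

lemma mem_families : S ∈ families s ↔ IsNoncrossing321 s S := by
  simp only [families, mem_filter, mem_powerset, and_iff_right_iff_imp]
  intro hS l hl
  refine mem_biUnion.2 ⟨l.toFinset, mem_powerset.2 fun x hx => ?_, ?_⟩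
  · exact (hS.mem_iff x).2 ⟨l, hl, List.mem_toFinset.1 hx⟩
  · rw [Multiset.mem_toFinset, Multiset.mem_lists_iff, List.toFinset_val, (hS.nodup l hl).dedup]
    rfl

lemma families_empty : families (∅ : Finset α) = {{[]}} := by
  ext S
  rw [mem_families, mem_singleton]
  constructor
  · intro hS
    refine eq_singleton_iff_unique_mem.2 ⟨hS.nil_mem, fun l hl => ?_⟩
    exact List.eq_nil_iff_forall_not_mem.2 fun x => hS.notMem (notMem_empty x) hl
  · rintro rfl
    constructor <;> simp [Avoids321]

lemma card_activeSites_singleton_nil : #(activeSites ({[]} : Finset (List α))) = 1 := by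
  have : outerBlocks ({[]} : Finset (List α)) = {[]} := by
    ext l
    simp only [mem_outerBlocks, mem_singleton]
    grind
  rw [activeSites, this, card_sigma, sum_singleton, insertionSites_nil, card_singleton]

lemma filter_removeEntry_eq (ha : ∀ x ∈ s, x < a) (hS : IsNoncrossing321 s S) :
    {T ∈ families (insert a s) | removeEntry a T = S} =
      (activeSites S).image (insertEntry a S) := by
  have has : a ∉ s := fun h => (ha a h).false
  ext T
  rw [mem_filter, mem_families, mem_image]
  constructor
  · rintro ⟨hT, rfl⟩
    exact exists_insertEntry_removeEntry hT (mem_insert_self a s) (by rwa [erase_insert has])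
  · rintro ⟨p, hp, rfl⟩
    exact ⟨isNoncrossing321_insertEntry hS ha hp, removeEntry_insertEntry hS has hp⟩

lemma sum_families_insert {M : Type*} [AddCommMonoid M] (ha : ∀ x ∈ s, x < a) (f : ℕ → M) :
    ∑ T ∈ families (insert a s), f #(activeSites T) =
      ∑ S ∈ families s, ∑ t ∈ Icc 3 (#(activeSites S) + 2), f t := by
  have hmaps : ∀ T ∈ families (insert a s), removeEntry a T ∈ families s := fun T hT => by
    rw [mem_families, ← erase_insert fun h => (ha a h).false]
    exact isNoncrossing321_removeEntry (mem_families.1 hT) a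
  rw [← sum_fiberwise_of_maps_to hmaps]
  refine sum_congr rfl fun S hS => ?_
  rw [mem_families] at hS
  have hinj := injOn_card_activeSites_insertEntry hS ha
  have hinj' : Set.InjOn (insertEntry a S) (activeSites S) := fun p hp q hq hpq =>
    hinj hp hq (congrArg (fun T => #(activeSites T)) hpq)
  rw [filter_removeEntry_eq ha hS, sum_image hinj', ← image_card_activeSites_insertEntry hS ha,
    sum_image hinj]

lemma sum_families_descendants (s : Finset α) (k : ℕ) :
    ∑ S ∈ families s, descendants k #(activeSites S) = descendants (#s + k) 1 := by
  induction s using induction_on_max generalizing k with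
  | empty =>
    rw [families_empty, sum_singleton, card_activeSites_singleton_nil, card_empty, zero_add]
  | insert a s ha ih =>
    rw [sum_families_insert ha, card_insert_of_notMem fun h => (ha a h).false, add_assoc,
      add_comm 1 k, ← ih (k + 1)]
    rfl

lemma card_families (s : Finset α) : #(families s) = descendants #s 1 := by
  simpa [descendants] using sum_families_descendants s 0

lemma isNoncrossing321_univ_iff [Fintype α] (hS : [] ∉ S) :
    IsNoncrossing321 univ (insert [] S) ↔ (∀ l ∈ S, l ≠ [] ∧ l.Nodup ∧ Avoids321 l) ∧
      (∀ x : α, ∃! l, l ∈ S ∧ x ∈ l) ∧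
      ¬ ∃ a b c d : α, a < b ∧ b < c ∧ c < d ∧
        ∃ l₁ ∈ S, ∃ l₂ ∈ S, l₁ ≠ l₂ ∧ a ∈ l₁ ∧ c ∈ l₁ ∧ b ∈ l₂ ∧ d ∈ l₂ := by
  constructor
  · intro h
    refine ⟨fun l hl => ⟨ne_of_mem_of_not_mem hl hS, h.nodup l (mem_insert_of_mem hl),
      h.avoids321 l (mem_insert_of_mem hl)⟩, fun x => ?_, ?_⟩
    · obtain ⟨l, hl, hx⟩ := (h.mem_iff x).1 (mem_univ x)
      refine ⟨l, ⟨mem_of_mem_insert_of_ne hl (List.ne_nil_of_mem hx), hx⟩, fun m hm => ?_⟩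
      exact h.eq_of_mem m (mem_insert_of_mem hm.1) l hl x hm.2 hx
    · rintro ⟨x, y, z, w, hxy, hyz, hzw, l, hl, m, hm, hne, hx, hz, hy, hw⟩
      exact hne (h.eq_of_crosses l (mem_insert_of_mem hl) m (mem_insert_of_mem hm)
        ⟨x, y, z, w, hxy, hyz, hzw, hx, hz, hy, hw⟩)
  · rintro ⟨hord, hcover, hcross⟩
    refine ⟨mem_insert_self _ _, ?_, ?_, fun x => ?_, fun l hl m hm x hxl hxm => ?_,
      fun l hl m hm ⟨x, y, z, w, hxy, hyz, hzw, hx, hz, hy, hw⟩ => ?_⟩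
    · exact forall_mem_insert _ _ _ |>.2 ⟨List.nodup_nil, fun l hl => (hord l hl).2.1⟩
    · exact forall_mem_insert _ _ _ |>.2 ⟨by simp [Avoids321], fun l hl => (hord l hl).2.2⟩
    · obtain ⟨l, ⟨hl, hx⟩, -⟩ := hcover x
      exact iff_of_true (mem_univ x) ⟨l, mem_insert_of_mem hl, hx⟩
    · exact (hcover x).unique ⟨mem_of_mem_insert_of_ne hl (List.ne_nil_of_mem hxl), hxl⟩
        ⟨mem_of_mem_insert_of_ne hm (List.ne_nil_of_mem hxm), hxm⟩
    · by_contra hne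
      exact hcross ⟨x, y, z, w, hxy, hyz, hzw,
        l, mem_of_mem_insert_of_ne hl (List.ne_nil_of_mem hx),
        m, mem_of_mem_insert_of_ne hm (List.ne_nil_of_mem hy), hne, hx, hz, hy, hw⟩

end Structures

theorem card_nc_321_avoiding_lists_general (α : Type*) [LinearOrder α] [Fintype α] :
    Nat.card {S : Finset (List α) // (∀ l ∈ S, l ≠ [] ∧ l.Nodup ∧ Avoids321 l) ∧
      (∀ x : α, ∃! l, l ∈ S ∧ x ∈ l) ∧
      ¬ ∃ a b c d : α, a < b ∧ b < c ∧ c < d ∧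
        ∃ l₁ ∈ S, ∃ l₂ ∈ S, l₁ ≠ l₂ ∧ a ∈ l₁ ∧ c ∈ l₁ ∧ b ∈ l₂ ∧ d ∈ l₂} =
    (3 * Fintype.card α).choose (Fintype.card α) / (2 * Fintype.card α + 1) := by
  rw [← descendants_one, ← card_univ, ← card_families]
  have hinj : Set.InjOn (fun T : Finset (List α) => T.erase []) (families (univ : Finset α)) :=
    (erase_injOn' []).mono fun T hT => (mem_families.1 hT).nil_mem
  rw [← card_image_of_injOn hinj]
  refine Nat.subtype_card _ fun S => ⟨fun hS => ?_, fun hS => ?_⟩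
  · obtain ⟨T, hT, rfl⟩ := mem_image.1 hS
    rw [mem_families] at hT
    exact (isNoncrossing321_univ_iff (notMem_erase [] T)).1 (by rwa [insert_erase hT.nil_mem])
  · have hnil : [] ∉ S := fun h => (hS.1 [] h).1 rfl
    exact mem_image.2 ⟨insert [] S, mem_families.2 ((isNoncrossing321_univ_iff hnil).2 hS),
      erase_insert hnil⟩

/-- Partitions of `[k]` into a set of noncrossing lists each of which avoids 321
(equivalently, pairs of a noncrossing set partition of `[k]` and a 321-avoiding
ordering of each block) are counted by `(1/(2k+1)) C(3k,k)`. -/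
theorem card_nc_321_avoiding_lists (k : ℕ) :
    Nat.card {S : Finset (List (Fin k)) // (∀ l ∈ S, l ≠ [] ∧ l.Nodup ∧ Avoids321 l) ∧
      (∀ x : Fin k, ∃! l, l ∈ S ∧ x ∈ l) ∧
      ¬ ∃ a b c d : Fin k, a < b ∧ b < c ∧ c < d ∧
        ∃ l₁ ∈ S, ∃ l₂ ∈ S, l₁ ≠ l₂ ∧ a ∈ l₁ ∧ c ∈ l₁ ∧ b ∈ l₂ ∧ d ∈ l₂} =
    (3 * k).choose k / (2 * k + 1) := by
  simpa only [Fintype.card_fin] using card_nc_321_avoiding_lists_general (Fin k)
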